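/- KP^P proves Σ1^P-Foundation: in any model of KP^P, every nonempty class definable by a Σ1^P formula with parameters has an ∈-least element. -/

import Mathlib

universe u

/-- de Bruijn-style formulas of the language of set theory, with primitive
bounded quantifiers (`∈`-bounded and `⊆`-bounded) and unbounded quantifiers.
`SF n` is the type of formulas with (at most) `n` free variables. -/
inductive SF : ℕ → Type
  | mem {n} (i j : Fin n) : SF n
  | eq {n} (i j : Fin n) : SF n
  | not {n} (φ : SF n) : SF n
  | and {n} (φ ψ : SF n) : SF n
  | or {n} (φ ψ : SF n) : SF n
  | bexMem {n} (i : Fin n) (φ : SF (n + 1)) : SF n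
  | ballMem {n} (i : Fin n) (φ : SF (n + 1)) : SF n
  | bexSub {n} (i : Fin n) (φ : SF (n + 1)) : SF n
  | ballSub {n} (i : Fin n) (φ : SF (n + 1)) : SF n
  | ex {n} (φ : SF (n + 1)) : SF n
  | all {n} (φ : SF (n + 1)) : SF n

variable {X : Type u}

/-- `a ⊆ b` in the structure `⟨X, E⟩`. -/
def SubE (E : X → X → Prop) (a b : X) : Prop := ∀ z, E z a → E z b

/-- Satisfaction of a formula in the structure `⟨X, E⟩` under a valuation. -/
def SF.Eval (E : X → X → Prop) : {n : ℕ} → SF n → (Fin n → X) → Prop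
  | _, .mem i j, v => E (v i) (v j)
  | _, .eq i j, v => v i = v j
  | _, .not φ, v => ¬ φ.Eval E v
  | _, .and φ ψ, v => φ.Eval E v ∧ ψ.Eval E v
  | _, .or φ ψ, v => φ.Eval E v ∨ ψ.Eval E v
  | _, .bexMem i φ, v => ∃ x, E x (v i) ∧ φ.Eval E (Fin.snoc v x)
  | _, .ballMem i φ, v => ∀ x, E x (v i) → φ.Eval E (Fin.snoc v x)
  | _, .bexSub i φ, v => ∃ x, SubE E x (v i) ∧ φ.Eval E (Fin.snoc v x)
  | _, .ballSub i φ, v => ∀ x, SubE E x (v i) → φ.Eval E (Fin.snoc v x)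
  | _, .ex φ, v => ∃ x, φ.Eval E (Fin.snoc v x)
  | _, .all φ, v => ∀ x, φ.Eval E (Fin.snoc v x)

/-- `Δ₀` formulas: only `∈`-bounded quantifiers. -/
def SF.IsDelta0 : {n : ℕ} → SF n → Prop
  | _, .mem _ _ => True
  | _, .eq _ _ => True
  | _, .not φ => φ.IsDelta0
  | _, .and φ ψ => φ.IsDelta0 ∧ ψ.IsDelta0
  | _, .or φ ψ => φ.IsDelta0 ∧ ψ.IsDelta0
  | _, .bexMem _ φ => φ.IsDelta0
  | _, .ballMem _ φ => φ.IsDelta0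
  | _, .bexSub _ _ => False
  | _, .ballSub _ _ => False
  | _, .ex _ => False
  | _, .all _ => False

/-- Takahashi's class `Δ₀^𝒫`: only `∈`-bounded and `⊆`-bounded quantifiers. -/
def SF.IsDelta0P : {n : ℕ} → SF n → Prop
  | _, .mem _ _ => True
  | _, .eq _ _ => True
  | _, .not φ => φ.IsDelta0P
  | _, .and φ ψ => φ.IsDelta0P ∧ ψ.IsDelta0P
  | _, .or φ ψ => φ.IsDelta0P ∧ ψ.IsDelta0P
  | _, .bexMem _ φ => φ.IsDelta0P
  | _, .ballMem _ φ => φ.IsDelta0P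
  | _, .bexSub _ φ => φ.IsDelta0P
  | _, .ballSub _ φ => φ.IsDelta0P
  | _, .ex _ => False
  | _, .all _ => False

def Delta0C : ∀ n, SF n → Prop := fun _ φ => φ.IsDelta0
def Delta0PC : ∀ n, SF n → Prop := fun _ φ => φ.IsDelta0P
def Sigma1C : ∀ n, SF n → Prop := fun _ φ => ∃ ψ, ψ.IsDelta0 ∧ φ = SF.ex ψ
def Pi1C : ∀ n, SF n → Prop := fun _ φ => ∃ ψ, ψ.IsDelta0 ∧ φ = SF.all ψ
def Sigma1PC : ∀ n, SF n → Prop := fun _ φ => ∃ ψ, ψ.IsDelta0P ∧ φ = SF.ex ψ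
def Pi1PC : ∀ n, SF n → Prop := fun _ φ => ∃ ψ, ψ.IsDelta0P ∧ φ = SF.all ψ
def FullC : ∀ n, SF n → Prop := fun _ _ => True

/-- A Gödel numbering of formulas. -/
def SF.encode : {n : ℕ} → SF n → ℕ
  | _, .mem i j => Nat.pair 0 (Nat.pair i.val j.val)
  | _, .eq i j => Nat.pair 1 (Nat.pair i.val j.val)
  | _, .not φ => Nat.pair 2 φ.encode
  | _, .and φ ψ => Nat.pair 3 (Nat.pair φ.encode ψ.encode)
  | _, .or φ ψ => Nat.pair 4 (Nat.pair φ.encode ψ.encode)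
  | _, .bexMem i φ => Nat.pair 5 (Nat.pair i.val φ.encode)
  | _, .ballMem i φ => Nat.pair 6 (Nat.pair i.val φ.encode)
  | _, .bexSub i φ => Nat.pair 7 (Nat.pair i.val φ.encode)
  | _, .ballSub i φ => Nat.pair 8 (Nat.pair i.val φ.encode)
  | _, .ex φ => Nat.pair 9 φ.encode
  | _, .all φ => Nat.pair 10 φ.encode

/-- A theory (set of sentences) is recursively enumerable if the set of Gödel
numbers of its members is the domain of a partial recursive function. -/
def REset (S : Set (SF 0)) : Prop :=
  ∃ f : ℕ →. ℕ, Nat.Partrec f ∧ ∀ φ : SF 0, φ ∈ S ↔ SF.encode φ ∈ f.Dom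

/-- `⟨X, E⟩ ⊨ S` for a set `S` of sentences. -/
def SatT (E : X → X → Prop) (S : Set (SF 0)) : Prop :=
  ∀ φ ∈ S, SF.Eval E φ (fun i => i.elim0)

/-! ## Axioms and axiom schemes -/

def ExtensionalityAx (E : X → X → Prop) : Prop := ∀ a b, (∀ z, E z a ↔ E z b) → a = b
def EmptySetAx (E : X → X → Prop) : Prop := ∃ a, ∀ z, ¬ E z a
def PairAx (E : X → X → Prop) : Prop := ∀ x y, ∃ a, ∀ z, E z a ↔ (z = x ∨ z = y)
def UnionAx (E : X → X → Prop) : Prop := ∀ a, ∃ b, ∀ z, E z b ↔ ∃ y, E y a ∧ E z y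
def SetDiffAx (E : X → X → Prop) : Prop := ∀ a b, ∃ c, ∀ z, E z c ↔ (E z a ∧ ¬ E z b)
def PowerAx (E : X → X → Prop) : Prop := ∀ a, ∃ p, ∀ z, E z p ↔ SubE E z a
def TransSet (E : X → X → Prop) (t : X) : Prop := ∀ y, E y t → ∀ z, E z y → E z t
def TCoAx (E : X → X → Prop) : Prop := ∀ a, ∃ t, TransSet E t ∧ SubE E a t
def SuccOf (E : X → X → Prop) (x s : X) : Prop := ∀ z, E z s ↔ (E z x ∨ z = x)
def InductiveSet (E : X → X → Prop) (a : X) : Prop :=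
  (∃ e, E e a ∧ ∀ z, ¬ E z e) ∧ ∀ x, E x a → ∃ s, E s a ∧ SuccOf E x s
def InfinityAx (E : X → X → Prop) : Prop := ∃ a, InductiveSet E a
def SetFoundationAx (E : X → X → Prop) : Prop :=
  ∀ z, (∃ x, E x z) → ∃ y, E y z ∧ ∀ x, E x y → ¬ E x z
/-- The axiom of choice: every set of pairwise disjoint nonempty sets has a transversal. -/
def ACAx (E : X → X → Prop) : Prop :=
  ∀ a, (∀ x, E x a → ∃ z, E z x) →
    (∀ x y, E x a → E y a → x ≠ y → ∀ z, E z x → ¬ E z y) →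
    ∃ c, ∀ x, E x a → ∃! z, E z c ∧ E z x

def SeparationScheme (E : X → X → Prop) (C : ∀ n, SF n → Prop) : Prop :=
  ∀ (n : ℕ) (φ : SF (n + 1)), C _ φ → ∀ (p : Fin n → X) (w : X),
    ∃ y, ∀ x, E x y ↔ (E x w ∧ φ.Eval E (Fin.snoc p x))

def CollectionScheme (E : X → X → Prop) (C : ∀ n, SF n → Prop) : Prop :=
  ∀ (n : ℕ) (φ : SF (n + 2)), C _ φ → ∀ (p : Fin n → X) (w : X),
    (∀ x, E x w → ∃ y, φ.Eval E (Fin.snoc (Fin.snoc p x) y)) →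
    ∃ c, ∀ x, E x w → ∃ y, E y c ∧ φ.Eval E (Fin.snoc (Fin.snoc p x) y)

def FoundationScheme (E : X → X → Prop) (C : ∀ n, SF n → Prop) : Prop :=
  ∀ (n : ℕ) (φ : SF (n + 1)), C _ φ → ∀ p : Fin n → X,
    (∃ x, φ.Eval E (Fin.snoc p x)) →
    ∃ y, φ.Eval E (Fin.snoc p y) ∧ ∀ x, E x y → ¬ φ.Eval E (Fin.snoc p x)

/-! ## Theories -/

def ModelMminus (E : X → X → Prop) : Prop :=
  ExtensionalityAx E ∧ EmptySetAx E ∧ PairAx E ∧ UnionAx E ∧ SetDiffAx E ∧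
    TCoAx E ∧ InfinityAx E ∧ SeparationScheme E Delta0C ∧ SetFoundationAx E

def ModelM (E : X → X → Prop) : Prop := ModelMminus E ∧ PowerAx E

def ModelKP (E : X → X → Prop) : Prop :=
  ExtensionalityAx E ∧ PairAx E ∧ UnionAx E ∧ SeparationScheme E Delta0C ∧
    CollectionScheme E Delta0C ∧ FoundationScheme E Pi1C

def ModelKPP (E : X → X → Prop) : Prop :=
  ModelM E ∧ CollectionScheme E Delta0PC ∧ FoundationScheme E Pi1PC

def ModelMOST (E : X → X → Prop) : Prop :=
  ModelM E ∧ SeparationScheme E Sigma1C ∧ ACAx E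

def ModelZF (E : X → X → Prop) : Prop :=
  ExtensionalityAx E ∧ EmptySetAx E ∧ PairAx E ∧ UnionAx E ∧ PowerAx E ∧
    InfinityAx E ∧ SeparationScheme E FullC ∧ CollectionScheme E FullC ∧
    FoundationScheme E FullC

/-! ## Internal set-theoretic machinery -/

/-- `p = {{x}, {x, y}}` (Kuratowski pair). -/
def IsPair (E : X → X → Prop) (p x y : X) : Prop :=
  ∀ z, E z p ↔ ((∀ w, E w z ↔ w = x) ∨ (∀ w, E w z ↔ (w = x ∨ w = y)))

def FunApp (E : X → X → Prop) (f x y : X) : Prop := ∃ q, E q f ∧ IsPair E q x y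

/-- `f` is a function with domain `d`. -/
def IsFuncOn (E : X → X → Prop) (f d : X) : Prop :=
  (∀ q, E q f → ∃ x y, IsPair E q x y ∧ E x d) ∧
  (∀ x y y', FunApp E f x y → FunApp E f x y' → y = y') ∧
  (∀ x, E x d → ∃ y, FunApp E f x y)

/-- `f` is an injective function from `dom` into `cod`. -/
def InjFunInto (E : X → X → Prop) (f dom cod : X) : Prop :=
  IsFuncOn E f dom ∧ (∀ x y, FunApp E f x y → E y cod) ∧
  (∀ x x' y, FunApp E f x y → FunApp E f x' y → x = x')

/-- `|t| ≤ |κ|`. -/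
def CardLe (E : X → X → Prop) (t κ : X) : Prop := ∃ f, InjFunInto E f t κ

def IsOrdinal (E : X → X → Prop) (x : X) : Prop :=
  TransSet E x ∧ ∀ y, E y x → TransSet E y

/-- An (initial ordinal =) cardinal: an ordinal that does not inject into any of
its members. -/
def IsCardinal (E : X → X → Prop) (κ : X) : Prop :=
  IsOrdinal E κ ∧ ∀ β, E β κ → ¬ CardLe E κ β

/-- `t` is the transitive closure of the set `x`. -/
def IsTCset (E : X → X → Prop) (t x : X) : Prop :=
  TransSet E t ∧ SubE E x t ∧ ∀ u, TransSet E u → SubE E x u → SubE E t u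

/-- `t` is the transitive closure of `{x}`. -/
def IsTCsingleton (E : X → X → Prop) (t x : X) : Prop :=
  TransSet E t ∧ E x t ∧ ∀ u, TransSet E u → E x u → SubE E t u

def IsOmega (E : X → X → Prop) (w : X) : Prop :=
  InductiveSet E w ∧ ∀ a, InductiveSet E a → SubE E w a

/-- `⟨X, E⟩` is `ω`-standard: its internal natural numbers are order-isomorphic
to the standard natural numbers. -/
def OmegaStandard (E : X → X → Prop) : Prop :=
  ∀ w, IsOmega E w → ∃ f : ℕ → X, (∀ n, E (f n) w) ∧ (∀ x, E x w → ∃ n, x = f n) ∧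
    ∀ m n : ℕ, (E (f m) (f n) ↔ m < n)

/-- `f` is (a function coding) the cumulative hierarchy `β ↦ V_β` for `β ∈ α`,
using `V_β = ⋃_{γ∈β} 𝒫(V_γ)`. -/
def IsRK (E : X → X → Prop) (α f : X) : Prop :=
  IsOrdinal E α ∧ IsFuncOn E f α ∧
  ∀ β vβ, E β α → FunApp E f β vβ →
    ∀ x, E x vβ ↔ ∃ γ, E γ β ∧ ∃ vγ, FunApp E f γ vγ ∧ SubE E x vγ

/-- Internal rank comparison `ρ(x) ≤ ρ(y)`: `x` belongs to every stage of the
cumulative hierarchy that `y` belongs to. -/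
def RankLe (E : X → X → Prop) (x y : X) : Prop :=
  ∀ α f β v, IsRK E α f → E β α → FunApp E f β v → E y v → E x v

/-- External `n`-th von Neumann natural number. -/
def IsVN (E : X → X → Prop) : ℕ → X → Prop
  | 0, x => ∀ z, ¬ E z x
  | (n + 1), x => ∃ y, IsVN E n y ∧ SuccOf E y x

/-- `a` is the `n`-th infinite cardinal `ℵ_n` (for external `n`, as computed in
the model): `ℵ₀ = ω`, and `ℵ_{n+1}` is the least cardinal above `ℵ_n`. -/
def IsAleph (E : X → X → Prop) : ℕ → X → Prop
  | 0, a => IsOmega E a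
  | (n + 1), a => ∃ b, IsAleph E n b ∧ IsCardinal E a ∧ E b a ∧
      ∀ c, IsCardinal E c → E b c → (c = a ∨ E a c)

/-- `a` is the cardinal `ℵ_ω` of the model: the least limit cardinal above `ω`. -/
def IsAlephOmega (E : X → X → Prop) (a : X) : Prop :=
  (IsCardinal E a ∧ (∃ w, IsOmega E w ∧ E w a) ∧
    (∀ β, E β a → ∃ μ, IsCardinal E μ ∧ E β μ ∧ E μ a)) ∧
  ∀ a', (IsCardinal E a' ∧ (∃ w, IsOmega E w ∧ E w a') ∧
    (∀ β, E β a' → ∃ μ, IsCardinal E μ ∧ E β μ ∧ E μ a')) → (a = a' ∨ E a a')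

/-! ## Internal satisfaction and the constructible hierarchy (for `V = L`) -/

/-- `c = ⟨n, a⟩` with the tag `n` an external natural (internally coded). -/
def TaggedBy (E : X → X → Prop) (c : X) (n : ℕ) (a : X) : Prop :=
  ∃ t, IsVN E n t ∧ IsPair E c t a

def CodeMem (E : X → X → Prop) (c i j : X) : Prop := ∃ p, IsPair E p i j ∧ TaggedBy E c 0 p
def CodeEq (E : X → X → Prop) (c i j : X) : Prop := ∃ p, IsPair E p i j ∧ TaggedBy E c 1 p
def CodeNot (E : X → X → Prop) (c' c : X) : Prop := TaggedBy E c' 2 c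
def CodeAnd (E : X → X → Prop) (c' c₁ c₂ : X) : Prop := ∃ p, IsPair E p c₁ c₂ ∧ TaggedBy E c' 3 p
def CodeEx (E : X → X → Prop) (c' i c : X) : Prop := ∃ p, IsPair E p i c ∧ TaggedBy E c' 4 p

/-- `d` is closed under the internal formation rules for codes of formulas with
variables indexed by elements of `w` (the internal `ω`). -/
def ClosedCode (E : X → X → Prop) (w d : X) : Prop :=
  (∀ i j c, E i w → E j w → CodeMem E c i j → E c d) ∧
  (∀ i j c, E i w → E j w → CodeEq E c i j → E c d) ∧
  (∀ c c', E c d → CodeNot E c' c → E c' d) ∧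
  (∀ c₁ c₂ c', E c₁ d → E c₂ d → CodeAnd E c' c₁ c₂ → E c' d) ∧
  (∀ i c c', E i w → E c d → CodeEx E c' i c → E c' d)

/-- `c` is an internal code of a first-order formula of the language of set theory. -/
def FormCode (E : X → X → Prop) (w c : X) : Prop := ∀ d, ClosedCode E w d → E c d

/-- An internal assignment of elements of `a` to the variables. -/
def IsAssign (E : X → X → Prop) (w a v : X) : Prop :=
  IsFuncOn E v w ∧ ∀ i y, FunApp E v i y → E y a

/-- `v' = v[i ↦ x]`. -/
def UpdateAssign (E : X → X → Prop) (w v : X) (i x v' : X) : Prop :=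
  FunApp E v' i x ∧ ∀ j, E j w → j ≠ i → ∀ y, (FunApp E v j y ↔ FunApp E v' j y)

def PairIn (E : X → X → Prop) (s c v : X) : Prop := ∃ q, E q s ∧ IsPair E q c v

/-- `s` is a (full) satisfaction class for the set structure `⟨a, E⟩`: a set of
pairs ⟨code, assignment⟩ obeying the Tarski conditions. -/
def SatSet (E : X → X → Prop) (w a s : X) : Prop :=
  (∀ q, E q s → ∃ c v, IsPair E q c v ∧ FormCode E w c ∧ IsAssign E w a v) ∧
  (∀ i j c v xi xj, E i w → E j w → CodeMem E c i j → IsAssign E w a v →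
    FunApp E v i xi → FunApp E v j xj → (PairIn E s c v ↔ E xi xj)) ∧
  (∀ i j c v xi xj, E i w → E j w → CodeEq E c i j → IsAssign E w a v →
    FunApp E v i xi → FunApp E v j xj → (PairIn E s c v ↔ xi = xj)) ∧
  (∀ c c' v, FormCode E w c → CodeNot E c' c → IsAssign E w a v →
    (PairIn E s c' v ↔ ¬ PairIn E s c v)) ∧
  (∀ c₁ c₂ c' v, FormCode E w c₁ → FormCode E w c₂ → CodeAnd E c' c₁ c₂ →
    IsAssign E w a v → (PairIn E s c' v ↔ (PairIn E s c₁ v ∧ PairIn E s c₂ v))) ∧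
  (∀ i c c' v, E i w → FormCode E w c → CodeEx E c' i c → IsAssign E w a v →
    (PairIn E s c' v ↔ ∃ x v', E x a ∧ IsAssign E w a v' ∧ UpdateAssign E w v i x v' ∧
      PairIn E s c v'))

/-- `b` is a subset of `a` definable over `⟨a, E⟩` (with parameters from `a`). -/
def DefSub (E : X → X → Prop) (w a s b : X) : Prop :=
  SubE E b a ∧ ∃ c, FormCode E w c ∧ ∃ v, IsAssign E w a v ∧ ∃ i, E i w ∧
    ∀ x, E x b ↔ (E x a ∧ ∃ v', IsAssign E w a v' ∧ UpdateAssign E w v i x v' ∧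
      PairIn E s c v')

/-- `f` codes the constructible hierarchy `β ↦ L_β` for `β ∈ α`, using
`L_β = ⋃_{γ∈β} Def(L_γ)`. -/
def IsLHier (E : X → X → Prop) (w f α : X) : Prop :=
  IsOrdinal E α ∧ IsFuncOn E f α ∧
  ∀ β vβ, E β α → FunApp E f β vβ →
    ∀ x, E x vβ ↔ ∃ γ, E γ β ∧ ∃ vγ, FunApp E f γ vγ ∧ ∃ s, SatSet E w vγ s ∧
      DefSub E w vγ s x

/-- The axiom `V = L`: every set belongs to some level of the constructible hierarchy. -/
def VeqL (E : X → X → Prop) : Prop :=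
  ∀ w, IsOmega E w → ∀ x, ∃ α f β vβ, IsLHier E w f α ∧ E β α ∧ FunApp E f β vβ ∧ E x vβ

/-! ## Extensions -/

/-- The substructure of `⟨X, E⟩` with underlying set `A`. -/
def restrict (E : X → X → Prop) (A : Set X) : A → A → Prop := fun a b => E a.1 b.1

/-- `B` is an end extension of `A` (both substructures of an ambient `⟨X, E⟩`). -/
def EndExtIn (E : X → X → Prop) (A B : Set X) : Prop :=
  A ⊆ B ∧ ∀ x y, x ∈ B → y ∈ A → E x y → x ∈ A

/-- `B` is a powerset-preserving end extension of `A` (within an ambient `⟨X, E⟩`);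
`x ⊆ y` is computed in `B`. -/
def PowExtIn (E : X → X → Prop) (A B : Set X) : Prop :=
  EndExtIn E A B ∧ ∀ x y, x ∈ B → y ∈ A → (∀ z, z ∈ B → E z x → E z y) → x ∈ A

/-- The whole structure `⟨X, E⟩` is an end extension of its substructure on `A`. -/
def EndExtSet (E : X → X → Prop) (A : Set X) : Prop :=
  ∀ x y, y ∈ A → E x y → x ∈ A

/-- `⟨X, E⟩` is a powerset-preserving end extension of its substructure on `A`. -/
def PowExtSet (E : X → X → Prop) (A : Set X) : Prop :=
  EndExtSet E A ∧ ∀ x y, y ∈ A → SubE E x y → x ∈ A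

/-- `⟨X, E⟩` is a rank extension of its substructure on `A`. -/
def RankExtSet (E : X → X → Prop) (A : Set X) : Prop :=
  PowExtSet E A ∧ ∀ x y, y ∈ A → RankLe E x y → x ∈ A

/-- The extension `⟨X, E⟩` of its substructure on `A` is proper and topless. -/
def ToplessSet (E : X → X → Prop) (A : Set X) : Prop :=
  A ≠ Set.univ ∧ ∀ c, (∀ x, E x c → x ∈ A) → c ∈ A

/-- The extension `⟨X, E⟩` of its substructure on `A` is proper and blunt (not topless). -/
def BluntSet (E : X → X → Prop) (A : Set X) : Prop :=
  A ≠ Set.univ ∧ ¬ ToplessSet E A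

/-! ## Weak dependent choice -/

/-- `δ_ω^φ(b, f, p)`: `f` is a function on `ω` with `f(0) = {b}` tracing the
`φ`-successor relation. -/
def IsWDCWitness (E : X → X → Prop) {n : ℕ} (φ : SF (n + 2)) (p : Fin n → X)
    (w b f : X) : Prop :=
  IsFuncOn E f w ∧
  (∃ z v, (∀ u, ¬ E u z) ∧ E z w ∧ FunApp E f z v ∧ ∀ t, E t v ↔ t = b) ∧
  ∀ m m' vm vm', E m w → SuccOf E m m' → E m' w → FunApp E f m vm → FunApp E f m' vm' →
    ((∀ x, E x vm → ∃ y, E y vm' ∧ φ.Eval E (Fin.snoc (Fin.snoc p x) y)) ∧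
     (∀ y, E y vm' → ∀ x, E x vm → φ.Eval E (Fin.snoc (Fin.snoc p x) y)))

/-- The scheme `Δ₀^𝒫-WDC_ω`. -/
def WDComega (E : X → X → Prop) : Prop :=
  ∀ (n : ℕ) (φ : SF (n + 2)), Delta0PC _ φ → ∀ p : Fin n → X,
    (∀ x, ∃ y, φ.Eval E (Fin.snoc (Fin.snoc p x) y)) →
    ∀ w, IsOmega E w → ∀ b, ∃ f, IsWDCWitness E φ p w b f

/-! ## Internal well-founded extensional relations (for `H_{≤κ}`) -/

def RRel (E : X → X → Prop) (R a b : X) : Prop := ∃ p, E p R ∧ IsPair E p a b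

def RelOn (E : X → X → Prop) (R k : X) : Prop :=
  ∀ p, E p R → ∃ a b, IsPair E p a b ∧ E a k ∧ E b k

/-- `BFEXT(R, k)`: `R ⊆ k × k` is extensional on `k`, has a top element, and every
nonempty subset of `k` has an `R`-minimal element. -/
def BFEXT (E : X → X → Prop) (R k : X) : Prop :=
  RelOn E R k ∧
  (∀ a b, E a k → E b k → (∀ c, E c k → (RRel E R c a ↔ RRel E R c b)) → a = b) ∧
  (∃ t, E t k ∧ ∀ b, E b k → b ≠ t → RRel E R b t) ∧
  (∀ S, SubE E S k → (∃ z, E z S) → ∃ m, E m S ∧ ∀ y, E y S → ¬ RRel E R y m)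

/-- `f` is an isomorphism of `⟨k, R⟩` with `⟨T, ∈⟩`. -/
def IsoOnto (E : X → X → Prop) (R k f T : X) : Prop :=
  IsFuncOn E f k ∧ (∀ x y, FunApp E f x y → E y T) ∧
  (∀ y, E y T → ∃ x, E x k ∧ FunApp E f x y) ∧
  (∀ x x' y, FunApp E f x y → FunApp E f x' y → x = x') ∧
  ∀ a b ya yb, E a k → E b k → FunApp E f a ya → FunApp E f b yb →
    (RRel E R a b ↔ E ya yb)

/-- The predicate `Xv = H_{≤κ} = {x : |TC(x)| ≤ κ}`. -/
def HleqPred (E : X → X → Prop) (Xv κ : X) : Prop :=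
  IsCardinal E κ ∧ ∀ x, E x Xv ↔ ∃ t, IsTCset E t x ∧ CardLe E t κ

/-- The explicit conjunction (i) ∧ (ii) ∧ (iii) asserting `Xv = H_{≤κ}`. -/
def ExplicitH (E : X → X → Prop) (Xv κ : X) : Prop :=
  IsCardinal E κ ∧
  (∀ R, BFEXT E R κ → ∃ x f T, E x Xv ∧ E f Xv ∧ E T Xv ∧ IsTCsingleton E T x ∧
    IsoOnto E R κ f T) ∧
  (∀ x, E x Xv → ∃ T f, E T Xv ∧ E f Xv ∧ IsTCsingleton E T x ∧ InjFunInto E f T κ)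

/-! Suppose that the class of all `x` with `∃ y, R x y`, where `R` is `Δ₀^𝒫`, contains `x₀` and has
no minimal element, and let `t` be a transitive set containing `x₀`. By collection, every set `r` of
witnesses admits a set `s` such that each `x ∈ t` with a witness in `r` has a member with a witness
in `s`. Iterating the step from `r` to `s` along `ω` yields a set `d` of such sets, and the elements
of `t` with a witness in a member of `d` form a nonempty set without a minimal element. This
contradicts set foundation.

The iteration must be carried out without choice: instead of `s` one takes the least level of the
cumulative hierarchy that contains suitable `s` for all `r` in the previous level. Being a level is
`Δ₀^𝒫` and levels are linearly ordered by `∈`, so the least one is unique. The approximations to the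
recursion therefore agree with each other, and they exist by `Σ₁^𝒫` induction, that is, by
`Π₁^𝒫`-Foundation.
-/

/-! ## Definability by formulas with parameters -/

namespace SF

/-- Extends a renaming of variables under one quantifier. -/
def liftRename {n m : ℕ} (f : Fin n → Fin m) : Fin (n + 1) → Fin (m + 1) :=
  Fin.lastCases (Fin.last m) fun i => (f i).castSucc

/-- Renaming of free variables, used to merge the variables of several formulas. -/
def rename : {n : ℕ} → SF n → {m : ℕ} → (Fin n → Fin m) → SF m
  | _, .mem i j, _, f => .mem (f i) (f j)
  | _, .eq i j, _, f => .eq (f i) (f j)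
  | _, .not φ, _, f => .not (φ.rename f)
  | _, .and φ ψ, _, f => .and (φ.rename f) (ψ.rename f)
  | _, .or φ ψ, _, f => .or (φ.rename f) (ψ.rename f)
  | _, .bexMem i φ, _, f => .bexMem (f i) (φ.rename (liftRename f))
  | _, .ballMem i φ, _, f => .ballMem (f i) (φ.rename (liftRename f))
  | _, .bexSub i φ, _, f => .bexSub (f i) (φ.rename (liftRename f))
  | _, .ballSub i φ, _, f => .ballSub (f i) (φ.rename (liftRename f))
  | _, .ex φ, _, f => .ex (φ.rename (liftRename f))
  | _, .all φ, _, f => .all (φ.rename (liftRename f))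

theorem snoc_comp_liftRename {n m : ℕ} (f : Fin n → Fin m) (v : Fin m → X) (x : X) :
    (fun i => (Fin.snoc v x : Fin (m + 1) → X) (liftRename f i)) =
      Fin.snoc (fun i => v (f i)) x := by
  funext i
  refine Fin.lastCases ?_ (fun j => ?_) i <;> simp [liftRename]

theorem eval_rename (E : X → X → Prop) {n : ℕ} (φ : SF n) {m : ℕ} (f : Fin n → Fin m)
    (v : Fin m → X) : (φ.rename f).Eval E v ↔ φ.Eval E fun i => v (f i) := by
  induction φ generalizing m <;> simp_all only [rename, Eval, snoc_comp_liftRename]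

theorem IsDelta0.rename {n : ℕ} {φ : SF n} (hφ : φ.IsDelta0) {m : ℕ} (f : Fin n → Fin m) :
    (φ.rename f).IsDelta0 := by
  induction φ generalizing m <;> simp_all [SF.rename, IsDelta0]

theorem IsDelta0P.rename {n : ℕ} {φ : SF n} (hφ : φ.IsDelta0P) {m : ℕ} (f : Fin n → Fin m) :
    (φ.rename f).IsDelta0P := by
  induction φ generalizing m <;> simp_all [SF.rename, IsDelta0P]

/-- A class of formulas containing the atomic ones and closed under renaming, the propositional
connectives and `∈`-bounded quantification. Only one quantifier and the connectives `¬`, `∧` are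
listed, since definability is a semantic notion. -/
class ClosedUnderBounded (C : ∀ n, SF n → Prop) : Prop where
  mem {n : ℕ} (i j : Fin n) : C n (.mem i j)
  eq {n : ℕ} (i j : Fin n) : C n (.eq i j)
  not {n : ℕ} {φ : SF n} : C n φ → C n (.not φ)
  and {n : ℕ} {φ ψ : SF n} : C n φ → C n ψ → C n (.and φ ψ)
  bexMem {n : ℕ} (i : Fin n) {φ : SF (n + 1)} : C (n + 1) φ → C n (.bexMem i φ)
  rename {n m : ℕ} {φ : SF n} (f : Fin n → Fin m) : C n φ → C m (φ.rename f)

instance : ClosedUnderBounded Delta0C where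
  mem _ _ := trivial
  eq _ _ := trivial
  not h := h
  and h h' := ⟨h, h'⟩
  bexMem _ _ h := h
  rename f h := h.rename f

instance : ClosedUnderBounded Delta0PC where
  mem _ _ := trivial
  eq _ _ := trivial
  not h := h
  and h h' := ⟨h, h'⟩
  bexMem _ _ h := h
  rename f h := h.rename f

/-- `P` is defined over `⟨X, E⟩` by a formula of the class `C` with parameters: the `i`-th free
variable of the formula stands for the variable or parameter `q i`. -/
class Definable (E : X → X → Prop) (C : ∀ n, SF n → Prop) {n : ℕ} (P : (Fin n → X) → Prop) :
    Prop where
  exists_formula : ∃ (m : ℕ) (q : Fin m → Fin n ⊕ X) (φ : SF m), C m φ ∧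
    ∀ v, P v ↔ φ.Eval E fun i => Sum.elim v id (q i)

/-- The binary relation `R` is definable over `⟨X, E⟩` by a formula of the class `C`. This form
lets instance search apply `R` to arbitrary terms. -/
class DefinableRel (E : X → X → Prop) (C : ∀ n, SF n → Prop) (R : X → X → Prop) : Prop where
  definable : Definable E C fun v : Fin 2 → X => R (v 0) (v 1)

/-- `t` is a term with parameters: the language being relational, a variable or a parameter. -/
class IsTerm {n : ℕ} (t : (Fin n → X) → X) : Prop where
  exists_eq : ∃ c : Fin n ⊕ X, ∀ v, t v = Sum.elim v id c

/-- `g` restricts a valuation to some of its variables. Instance search uses this to see through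
the `Fin.init`s that the quantifier rules of `Definable` introduce. -/
class IsProjection {n k : ℕ} (g : (Fin n → X) → Fin k → X) : Prop where
  exists_index : ∃ f : Fin k → Fin n, ∀ v i, g v i = v (f i)

section Terms

variable {n k : ℕ}

instance : IsProjection fun v : Fin n → X => v := ⟨id, fun _ _ => rfl⟩

instance : IsProjection (Fin.init : (Fin (n + 1) → X) → Fin n → X) :=
  ⟨Fin.castSucc, fun _ _ => rfl⟩

instance (g : (Fin n → X) → Fin (k + 1) → X) [hg : IsProjection g] :
    IsProjection fun v => (Fin.init (g v) : Fin k → X) :=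
  let ⟨f, hf⟩ := hg.exists_index
  ⟨fun i => f i.castSucc, fun v i => hf v i.castSucc⟩

instance (a : X) : IsTerm fun _ : Fin n → X => a := ⟨.inr a, fun _ => rfl⟩

instance (g : (Fin n → X) → Fin k → X) [hg : IsProjection g] (i : Fin k) :
    IsTerm fun v => g v i :=
  let ⟨f, hf⟩ := hg.exists_index
  ⟨.inl (f i), fun v => hf v i⟩

instance (t : (Fin k → X) → X) [ht : IsTerm t] (g : (Fin n → X) → Fin k → X)
    [hg : IsProjection g] : IsTerm fun v => t (g v) := by
  obtain ⟨f, hf⟩ := hg.exists_index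
  obtain ⟨i | a, hc⟩ := ht.exists_eq
  · exact ⟨.inl (f i), fun v => (hc _).trans (hf v i)⟩
  · exact ⟨.inr a, fun v => hc _⟩

instance (p : Fin k → X) (i : Fin (k + n)) : IsTerm fun v : Fin n → X => Fin.append p v i := by
  induction i using Fin.addCases with
  | left i => exact ⟨.inr (p i), fun v => Fin.append_left p v i⟩
  | right i => exact ⟨.inl i, fun v => Fin.append_right p v i⟩

theorem isTerm_snoc {s : Fin k → (Fin n → X) → X} {t : (Fin n → X) → X} (hs : ∀ i, IsTerm (s i))
    (ht : IsTerm t) (i : Fin (k + 1)) :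
    IsTerm fun v => (Fin.snoc (fun j => s j v) (t v) : Fin (k + 1) → X) i := by
  induction i using Fin.lastCases with
  | last => simpa only [Fin.snoc_last] using ht
  | cast i => simpa only [Fin.snoc_castSucc] using hs i

end Terms

namespace Definable

variable {E : X → X → Prop} {C : ∀ n, SF n → Prop} {n m : ℕ}

theorem of_iff {P Q : (Fin n → X) → Prop} (hP : Definable E C P) (h : ∀ v, Q v ↔ P v) :
    Definable E C Q := by
  rwa [show Q = P from funext fun v => propext (h v)]

theorem of_formula {φ : SF m} (hφ : C m φ) {t : Fin m → (Fin n → X) → X} (ht : ∀ i, IsTerm (t i)) :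
    Definable E C fun v => φ.Eval E fun i => t i v := by
  choose q hq using fun i => (ht i).exists_eq
  exact ⟨m, q, φ, hφ, fun v => by simp only [hq]⟩

theorem subst {P : (Fin m → X) → Prop} (hP : Definable E C P) {t : Fin m → (Fin n → X) → X}
    (ht : ∀ i, IsTerm (t i)) : Definable E C fun v => P fun i => t i v := by
  obtain ⟨k, q, φ, hφ, hPφ⟩ := hP.exists_formula
  have hq (i : Fin k) : IsTerm fun v => Sum.elim (fun j => t j v) id (q i) := by
    rcases q i with j | a
    · exact ht j
    · exact inferInstanceAs (IsTerm fun _ => a)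
  exact (of_formula hφ hq).of_iff fun v => hPφ _

theorem exists_params [Nonempty X] [ClosedUnderBounded C] {P : (Fin n → X) → Prop}
    (hP : Definable E C P) : ∃ (k : ℕ) (p : Fin k → X) (φ : SF (k + n)), C (k + n) φ ∧
      ∀ v, P v ↔ φ.Eval E (Fin.append p v) := by
  obtain ⟨m, q, φ, hφ, hPφ⟩ := hP.exists_formula
  let p (i : Fin m) : X := Sum.elim (fun _ => Classical.arbitrary X) id (q i)
  let f (i : Fin m) : Fin (m + n) := Sum.elim (Fin.natAdd m) (fun _ => Fin.castAdd n i) (q i)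
  have hf (v : Fin n → X) (i : Fin m) : Fin.append p v (f i) = Sum.elim v id (q i) := by
    rcases hq : q i with j | a <;> simp [p, f, hq]
  refine ⟨m, p, φ.rename f, ClosedUnderBounded.rename f hφ, fun v => ?_⟩
  simp only [hPφ, eval_rename, hf]

instance rel (R : X → X → Prop) [hR : DefinableRel E C R] (s t : (Fin n → X) → X)
    [hs : IsTerm s] [ht : IsTerm t] : Definable E C fun v => R (s v) (t v) :=
  hR.definable.subst (t := ![s, t]) (Fin.forall_fin_two.2 ⟨hs, ht⟩)

instance snoc_init (P : (Fin (n + 1) → X) → Prop) [hP : Definable E C P] :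
    Definable E C fun v => P (Fin.snoc (Fin.init v) (v (Fin.last n))) := by
  simpa only [Fin.snoc_init_self] using hP

section Connectives

variable [ClosedUnderBounded C]

instance mem (s t : (Fin n → X) → X) [hs : IsTerm s] [ht : IsTerm t] :
    Definable E C fun v => E (s v) (t v) :=
  of_formula (t := ![s, t]) (ClosedUnderBounded.mem 0 1) (Fin.forall_fin_two.2 ⟨hs, ht⟩)

instance eq (s t : (Fin n → X) → X) [hs : IsTerm s] [ht : IsTerm t] :
    Definable E C fun v => s v = t v :=
  of_formula (t := ![s, t]) (ClosedUnderBounded.eq 0 1) (Fin.forall_fin_two.2 ⟨hs, ht⟩)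

instance not (P : (Fin n → X) → Prop) [hP : Definable E C P] : Definable E C fun v => ¬ P v :=
  let ⟨m, q, φ, hφ, hPφ⟩ := hP.exists_formula
  ⟨m, q, .not φ, ClosedUnderBounded.not hφ, fun v => not_congr (hPφ v)⟩

instance and (P Q : (Fin n → X) → Prop) [hP : Definable E C P] [hQ : Definable E C Q] :
    Definable E C fun v => P v ∧ Q v := by
  obtain ⟨k, p, φ, hφ, hPφ⟩ := hP.exists_formula
  obtain ⟨l, q, ψ, hψ, hQψ⟩ := hQ.exists_formula
  refine ⟨k + l, Fin.append p q, .and (φ.rename (Fin.castAdd l)) (ψ.rename (Fin.natAdd k)),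
    ClosedUnderBounded.and (ClosedUnderBounded.rename _ hφ) (ClosedUnderBounded.rename _ hψ),
    fun v => ?_⟩
  simp only [hPφ, hQψ, Eval, eval_rename, Fin.append_left, Fin.append_right]

instance or (P Q : (Fin n → X) → Prop) [Definable E C P] [Definable E C Q] :
    Definable E C fun v => P v ∨ Q v :=
  of_iff (P := fun v => ¬ (¬ P v ∧ ¬ Q v)) inferInstance fun _ => or_iff_not_and_not

instance imp (P Q : (Fin n → X) → Prop) [Definable E C P] [Definable E C Q] :
    Definable E C fun v => P v → Q v :=
  of_iff (P := fun v => ¬ P v ∨ Q v) inferInstance fun _ => imp_iff_not_or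

end Connectives

section Quantifiers

variable [ClosedUnderBounded C]

/-- `B` is the bounding relation `∈` or `⊆`, and `hB` is the formation rule of its quantifier. -/
theorem bounded_exists_var {B : X → X → Prop}
    (hB : ∀ {k : ℕ} (i : Fin k) {φ : SF (k + 1)}, C (k + 1) φ → ∃ ψ : SF k, C k ψ ∧
      ∀ v, ψ.Eval E v ↔ ∃ x, B x (v i) ∧ φ.Eval E (Fin.snoc v x))
    {P : (Fin n → X) → X → Prop} (i : Fin n)
    (hP : Definable E C fun v : Fin (n + 1) → X => P (Fin.init v) (v (Fin.last n))) :
    Definable E C fun v => ∃ x, B x (v i) ∧ P v x := by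
  cases isEmpty_or_nonempty X
  · exact of_iff (P := fun v => v i = v i) inferInstance fun v => isEmptyElim (v i)
  obtain ⟨k, p, φ, hφ, hPφ⟩ := hP.exists_params
  obtain ⟨ψ, hψ, hψφ⟩ := hB (Fin.natAdd k i) hφ
  refine (of_formula (t := fun j v => Fin.append p v j) hψ fun j => inferInstance).of_iff
    fun v => ?_
  have hφv (x : X) : P v x ↔ φ.Eval E (Fin.snoc (Fin.append p v) x) := by
    simpa only [Fin.init_snoc, Fin.snoc_last, Fin.append_snoc] using hPφ (Fin.snoc v x)
  simp only [hψφ, hφv, Fin.append_right]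

theorem bounded_exists {B : X → X → Prop}
    (hB : ∀ {k : ℕ} (i : Fin k) {φ : SF (k + 1)}, C (k + 1) φ → ∃ ψ : SF k, C k ψ ∧
      ∀ v, ψ.Eval E v ↔ ∃ x, B x (v i) ∧ φ.Eval E (Fin.snoc v x))
    {P : (Fin n → X) → X → Prop} {t : (Fin n → X) → X} (ht : IsTerm t)
    (hP : Definable E C fun v : Fin (n + 1) → X => P (Fin.init v) (v (Fin.last n))) :
    Definable E C fun v => ∃ x, B x (t v) ∧ P v x := by
  have hlast : Definable E C fun v : Fin (n + 1) → X =>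
      ∃ x, B x (v (Fin.last n)) ∧ P (Fin.init v) x := by
    refine bounded_exists_var hB (Fin.last n) (P := fun v => P (Fin.init v)) ?_
    refine (hP.subst (n := n + 2) (isTerm_snoc (s := fun j v => v j.castSucc.castSucc)
      (t := fun v => v (Fin.last _)) (fun j => inferInstance) inferInstance)).of_iff fun v => ?_
    simp only [Fin.init_snoc, Fin.snoc_last]
    rfl
  refine (hlast.subst (t := fun i v => (Fin.snoc (fun j => v j) (t v) : Fin (n + 1) → X) i)
    (isTerm_snoc (fun j => inferInstance) ht)).of_iff fun v => ?_
  simp only [Fin.init_snoc, Fin.snoc_last]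

instance bexMem (P : (Fin n → X) → X → Prop) (t : (Fin n → X) → X) [ht : IsTerm t]
    [hP : Definable E C fun v : Fin (n + 1) → X => P (Fin.init v) (v (Fin.last n))] :
    Definable E C fun v => ∃ x, E x (t v) ∧ P v x :=
  bounded_exists (fun i φ hφ => ⟨.bexMem i φ, ClosedUnderBounded.bexMem i hφ, fun _ => Iff.rfl⟩)
    ht hP

instance ballMem (P : (Fin n → X) → X → Prop) (t : (Fin n → X) → X) [IsTerm t]
    [Definable E C fun v : Fin (n + 1) → X => P (Fin.init v) (v (Fin.last n))] :
    Definable E C fun v => ∀ x, E x (t v) → P v x :=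
  of_iff (P := fun v => ¬ ∃ x, E x (t v) ∧ ¬ P v x) inferInstance fun _ => by
    simp only [not_exists, not_and, not_not]

instance sub (s t : (Fin n → X) → X) [IsTerm s] [IsTerm t] :
    Definable E C fun v => SubE E (s v) (t v) := by
  unfold SubE
  infer_instance

instance bexSub (P : (Fin n → X) → X → Prop) (t : (Fin n → X) → X) [ht : IsTerm t]
    [hP : Definable E Delta0PC fun v : Fin (n + 1) → X => P (Fin.init v) (v (Fin.last n))] :
    Definable E Delta0PC fun v => ∃ x, SubE E x (t v) ∧ P v x :=
  bounded_exists (fun i φ hφ => ⟨.bexSub i φ, hφ, fun _ => Iff.rfl⟩) ht hP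

instance ballSub (P : (Fin n → X) → X → Prop) (t : (Fin n → X) → X) [IsTerm t]
    [Definable E Delta0PC fun v : Fin (n + 1) → X => P (Fin.init v) (v (Fin.last n))] :
    Definable E Delta0PC fun v => ∀ x, SubE E x (t v) → P v x :=
  of_iff (P := fun v => ¬ ∃ x, SubE E x (t v) ∧ ¬ P v x) inferInstance fun _ => by
    simp only [not_exists, not_and, not_not]

end Quantifiers

section Snoc

variable [Nonempty X] [ClosedUnderBounded C]

theorem exists_formula_snoc (P : X → Prop) [hP : Definable E C fun v : Fin 1 → X => P (v 0)] :
    ∃ (k : ℕ) (p : Fin k → X) (φ : SF (k + 1)), C (k + 1) φ ∧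
      ∀ x, P x ↔ φ.Eval E (Fin.snoc p x) := by
  obtain ⟨k, p, φ, hφ, hPφ⟩ := hP.exists_params
  exact ⟨k, p, φ, hφ, fun x => by
    simpa only [Fin.append_right_eq_snoc] using hPφ fun _ => x⟩

theorem exists_formula_snoc_snoc (R : X → X → Prop)
    [hR : Definable E C fun v : Fin 2 → X => R (v 0) (v 1)] :
    ∃ (k : ℕ) (p : Fin k → X) (φ : SF (k + 2)), C (k + 2) φ ∧
      ∀ x y, R x y ↔ φ.Eval E (Fin.snoc (Fin.snoc p x) y) := by
  obtain ⟨k, p, φ, hφ, hRφ⟩ := hR.exists_params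
  refine ⟨k, p, φ, hφ, fun x y => ?_⟩
  have happend : Fin.append p (Fin.snoc (fun _ : Fin 1 => x) y) = Fin.snoc (Fin.snoc p x) y := by
    rw [Fin.append_snoc, Fin.append_right_eq_snoc]
  rw [← happend, ← hRφ]
  rfl

end Snoc

end Definable
end SF

open SF

section Schemes

variable {E : X → X → Prop} {C : ∀ n, SF n → Prop} [ClosedUnderBounded C]

theorem SeparationScheme.exists_sep (h : SeparationScheme E C) (P : X → Prop)
    [Definable E C fun v : Fin 1 → X => P (v 0)] (w : X) : ∃ y, ∀ x, E x y ↔ E x w ∧ P x := by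
  have : Nonempty X := ⟨w⟩
  obtain ⟨k, p, φ, hφ, hPφ⟩ := Definable.exists_formula_snoc (E := E) (C := C) P
  simpa only [hPφ] using h k φ hφ p w

theorem CollectionScheme.exists_bound (h : CollectionScheme E C) (R : X → X → Prop)
    [Definable E C fun v : Fin 2 → X => R (v 0) (v 1)] (w : X) (hw : ∀ x, E x w → ∃ y, R x y) :
    ∃ c, ∀ x, E x w → ∃ y, E y c ∧ R x y := by
  have : Nonempty X := ⟨w⟩
  obtain ⟨k, p, φ, hφ, hRφ⟩ := Definable.exists_formula_snoc_snoc (E := E) (C := C) R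
  simp only [hRφ] at hw ⊢
  exact h k φ hφ p w hw

theorem FoundationScheme.sigma1_induction (h : FoundationScheme E Pi1PC) (R : X → X → Prop)
    [Definable E Delta0PC fun v : Fin 2 → X => R (v 0) (v 1)]
    (hstep : ∀ x, (∀ z, E z x → ∃ y, R z y) → ∃ y, R x y) (x : X) : ∃ y, R x y := by
  have : Nonempty X := ⟨x⟩
  by_contra hx
  obtain ⟨k, p, φ, hφ, hRφ⟩ :=
    Definable.exists_formula_snoc_snoc (E := E) (C := Delta0PC) fun x y => ¬ R x y
  have heval (z : X) : (SF.all φ).Eval E (Fin.snoc p z) ↔ ¬ ∃ y, R z y := by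
    simp only [SF.Eval, ← hRφ, not_exists]
  obtain ⟨z, hz, hmin⟩ := h k (.all φ) ⟨φ, hφ, rfl⟩ p ⟨x, (heval x).2 hx⟩
  exact (heval z).1 hz (hstep z fun y hy => not_not.1 (mt (heval y).2 (hmin y hy)))

end Schemes

/-! ## `Δ₀^𝒫`-Separation in models of `M` -/

namespace SF

theorem forall_snoc_mem {E : X → X → Prop} {n : ℕ} {v : Fin n → X} {a x : X}
    (hv : ∀ i, E (v i) a) (hx : E x a) (i : Fin (n + 1)) :
    E ((Fin.snoc v x : Fin (n + 1) → X) i) a := by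
  induction i using Fin.lastCases with
  | last => simpa only [Fin.snoc_last] using hx
  | cast i => simpa only [Fin.snoc_castSucc] using hv i

/-- On valuations in `a`, the formula `φ` is equivalent to a `Δ₀` formula with parameters. For a
transitive set `a` this holds for every `Δ₀^𝒫` formula, because the subsets of members of `a` all
lie in a larger transitive set. -/
def Delta0On (E : X → X → Prop) (a : X) {n : ℕ} (φ : SF n) : Prop :=
  ∃ P : (Fin n → X) → Prop, Definable E Delta0C P ∧ ∀ v, (∀ i, E (v i) a) → (P v ↔ φ.Eval E v)

namespace Delta0On

variable {E : X → X → Prop} {a b : X} {n : ℕ}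

theorem not {φ : SF n} : φ.Delta0On E a → φ.not.Delta0On E a
  | ⟨P, _, hPφ⟩ => ⟨fun v => ¬ P v, inferInstance, fun v hv => not_congr (hPφ v hv)⟩

theorem and {φ ψ : SF n} : φ.Delta0On E a → ψ.Delta0On E a → (φ.and ψ).Delta0On E a
  | ⟨P, _, hPφ⟩, ⟨Q, _, hQψ⟩ =>
    ⟨fun v => P v ∧ Q v, inferInstance, fun v hv => and_congr (hPφ v hv) (hQψ v hv)⟩

theorem or {φ ψ : SF n} : φ.Delta0On E a → ψ.Delta0On E a → (φ.or ψ).Delta0On E a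
  | ⟨P, _, hPφ⟩, ⟨Q, _, hQψ⟩ =>
    ⟨fun v => P v ∨ Q v, inferInstance, fun v hv => or_congr (hPφ v hv) (hQψ v hv)⟩

theorem bexMem {φ : SF (n + 1)} (ha : TransSet E a) (i : Fin n) :
    φ.Delta0On E a → (SF.bexMem i φ).Delta0On E a
  | ⟨P, _, hPφ⟩ => ⟨fun v => ∃ x, E x (v i) ∧ P (Fin.snoc v x), inferInstance, fun _ hv =>
    exists_congr fun x => and_congr_right fun hx =>
      hPφ _ (forall_snoc_mem hv (ha _ (hv i) x hx))⟩

theorem ballMem {φ : SF (n + 1)} (ha : TransSet E a) (i : Fin n) :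
    φ.Delta0On E a → (SF.ballMem i φ).Delta0On E a
  | ⟨P, _, hPφ⟩ => ⟨fun v => ∀ x, E x (v i) → P (Fin.snoc v x), inferInstance, fun _ hv =>
    forall_congr' fun x => imp_congr_right fun hx =>
      hPφ _ (forall_snoc_mem hv (ha _ (hv i) x hx))⟩

theorem bexSub {φ : SF (n + 1)} (hab : ∀ y, E y a → ∀ x, SubE E x y → E x b) (i : Fin n) :
    φ.Delta0On E b → (SF.bexSub i φ).Delta0On E a
  | ⟨P, _, hPφ⟩ => by
    refine ⟨fun v => ∃ x, E x b ∧ SubE E x (v i) ∧ P (Fin.snoc v x), inferInstance, fun v hv =>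
      exists_congr fun x => ?_⟩
    rw [← and_assoc, and_iff_right_of_imp (hab _ (hv i) x)]
    exact and_congr_right fun hx =>
      hPφ _ (forall_snoc_mem (fun j => hab _ (hv j) _ fun _ => id) (hab _ (hv i) x hx))

theorem ballSub {φ : SF (n + 1)} (hab : ∀ y, E y a → ∀ x, SubE E x y → E x b) (i : Fin n) :
    φ.Delta0On E b → (SF.ballSub i φ).Delta0On E a
  | ⟨P, _, hPφ⟩ => by
    refine ⟨fun v => ∀ x, E x b → SubE E x (v i) → P (Fin.snoc v x), inferInstance, fun v hv =>
      forall_congr' fun x => ?_⟩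
    rw [← and_imp, and_iff_right_of_imp (hab _ (hv i) x)]
    exact imp_congr_right fun hx =>
      hPφ _ (forall_snoc_mem (fun j => hab _ (hv j) _ fun _ => id) (hab _ (hv i) x hx))

end Delta0On

end SF

namespace ModelM

variable {E : X → X → Prop} (hM : ModelM E)
include hM

theorem ext {a b : X} (h : ∀ z, E z a ↔ E z b) : a = b := hM.1.1 a b h

theorem subset_antisymm {a b : X} (hab : SubE E a b) (hba : SubE E b a) : a = b :=
  hM.ext fun z => ⟨hab z, hba z⟩

theorem exists_pair (x y : X) : ∃ a, ∀ z, E z a ↔ z = x ∨ z = y := hM.1.2.2.1 x y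

theorem exists_sUnion (a : X) : ∃ b, ∀ z, E z b ↔ ∃ y, E y a ∧ E z y := hM.1.2.2.2.1 a

theorem exists_transSet_superset (a : X) : ∃ t, TransSet E t ∧ SubE E a t :=
  hM.1.2.2.2.2.2.1 a

theorem exists_inductiveSet : ∃ w, InductiveSet E w := hM.1.2.2.2.2.2.2.1

theorem separationScheme_delta0 : SeparationScheme E Delta0C := hM.1.2.2.2.2.2.2.2.1

theorem exists_minimal_mem {z x : X} (hx : E x z) : ∃ y, E y z ∧ ∀ x, E x y → ¬ E x z :=
  hM.1.2.2.2.2.2.2.2.2 z ⟨x, hx⟩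

theorem exists_power (a : X) : ∃ p, ∀ z, E z p ↔ SubE E z a := hM.2 a

theorem exists_union (a b : X) : ∃ c, ∀ z, E z c ↔ E z a ∨ E z b := by
  obtain ⟨q, hq⟩ := hM.exists_pair a b
  obtain ⟨c, hc⟩ := hM.exists_sUnion q
  exact ⟨c, fun z => by simp only [hc, hq, exists_eq_or_imp, exists_eq_left]⟩

theorem exists_insert (x a : X) : ∃ c, ∀ z, E z c ↔ z = x ∨ E z a := by
  obtain ⟨q, hq⟩ := hM.exists_pair x x
  obtain ⟨c, hc⟩ := hM.exists_union q a
  exact ⟨c, fun z => by simp only [hc, hq, or_self]⟩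

theorem exists_transSet_mem (x : X) : ∃ t, TransSet E t ∧ E x t := by
  obtain ⟨c, hc⟩ := hM.exists_insert x x
  obtain ⟨t, ht, hct⟩ := hM.exists_transSet_superset c
  exact ⟨t, ht, hct x ((hc x).2 (.inl rfl))⟩

theorem exists_transSet_forall_mem {n : ℕ} (p : Fin n → X) (w : X) :
    ∃ t, TransSet E t ∧ SubE E w t ∧ ∀ i, E (p i) t := by
  induction n generalizing w with
  | zero =>
    obtain ⟨t, ht, hwt⟩ := hM.exists_transSet_superset w
    exact ⟨t, ht, hwt, fun i => i.elim0⟩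
  | succ n ih =>
    obtain ⟨c, hc⟩ := hM.exists_insert (p 0) w
    obtain ⟨t, ht, hct, hpt⟩ := ih (Fin.tail p) c
    exact ⟨t, ht, fun z hz => hct z ((hc z).2 (.inr hz)),
      Fin.cases (hct _ ((hc _).2 (.inl rfl))) hpt⟩

theorem exists_transSet_forall_subset_mem {a : X} (ha : TransSet E a) :
    ∃ b, TransSet E b ∧ ∀ y, E y a → ∀ x, SubE E x y → E x b := by
  obtain ⟨b, hb⟩ := hM.exists_power a
  exact ⟨b, fun y hy z hz => (hb z).2 (ha z ((hb y).1 hy z hz)),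
    fun y hy x hx => (hb x).2 fun z hz => ha y hy z (hx z hz)⟩

theorem delta0On {n : ℕ} {φ : SF n} (hφ : φ.IsDelta0P) {a : X} (ha : TransSet E a) :
    φ.Delta0On E a := by
  induction φ generalizing a with
  | mem i j => exact ⟨fun v => E (v i) (v j), inferInstance, fun _ _ => Iff.rfl⟩
  | eq i j => exact ⟨fun v => v i = v j, inferInstance, fun _ _ => Iff.rfl⟩
  | not φ ih => exact (ih hφ ha).not
  | and φ ψ ihφ ihψ => exact (ihφ hφ.1 ha).and (ihψ hφ.2 ha)
  | or φ ψ ihφ ihψ => exact (ihφ hφ.1 ha).or (ihψ hφ.2 ha)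
  | bexMem i φ ih => exact (ih hφ ha).bexMem ha i
  | ballMem i φ ih => exact (ih hφ ha).ballMem ha i
  | bexSub i φ ih =>
    obtain ⟨b, hb, hab⟩ := hM.exists_transSet_forall_subset_mem ha
    exact (ih hφ hb).bexSub hab i
  | ballSub i φ ih =>
    obtain ⟨b, hb, hab⟩ := hM.exists_transSet_forall_subset_mem ha
    exact (ih hφ hb).ballSub hab i
  | ex | all => exact hφ.elim

theorem separationScheme_delta0P : SeparationScheme E Delta0PC := by
  intro n φ hφ p w
  obtain ⟨t, ht, hwt, hpt⟩ := hM.exists_transSet_forall_mem p w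
  obtain ⟨P, hP, hPφ⟩ := hM.delta0On hφ ht
  have hPp : Definable E Delta0C fun v : Fin 1 → X => P (Fin.snoc p (v 0)) :=
    hP.subst (t := fun i v => (Fin.snoc (fun j => p j) (v 0) : Fin (n + 1) → X) i)
      (isTerm_snoc (fun j => inferInstance) inferInstance)
  obtain ⟨y, hy⟩ := hM.separationScheme_delta0.exists_sep (fun x => P (Fin.snoc p x)) w
  exact ⟨y, fun x => (hy x).trans <| and_congr_right fun hx =>
    hPφ _ (forall_snoc_mem hpt (hwt x hx))⟩

section Foundation

variable (P : X → Prop) [Definable E Delta0PC fun v : Fin 1 → X => P (v 0)]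

theorem exists_sep (w : X) : ∃ y, ∀ x, E x y ↔ E x w ∧ P x :=
  hM.separationScheme_delta0P.exists_sep P w

theorem exists_minimal {x : X} (hx : P x) : ∃ y, P y ∧ ∀ z, E z y → ¬ P z := by
  obtain ⟨t, ht, hxt⟩ := hM.exists_transSet_mem x
  obtain ⟨s, hs⟩ := hM.exists_sep P t
  obtain ⟨y, hy, hmin⟩ := hM.exists_minimal_mem ((hs x).2 ⟨hxt, hx⟩)
  obtain ⟨hyt, hPy⟩ := (hs y).1 hy
  exact ⟨y, hPy, fun z hz hPz => hmin z hz ((hs z).2 ⟨ht y hyt z hz, hPz⟩)⟩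

theorem induction (hstep : ∀ x, (∀ z, E z x → P z) → P x) (x : X) : P x := by
  by_contra hx
  obtain ⟨y, hy, hmin⟩ := hM.exists_minimal (fun x => ¬ P x) hx
  exact hy (hstep y fun z hz => not_not.1 (hmin z hz))

end Foundation

theorem asymm {a b : X} (hab : E a b) : ¬ E b a := by
  refine hM.induction (fun b => ∀ a, E a b → ¬ E b a) (fun b ih a hab hba => ?_) b a hab
  exact ih a hab b hba hab

theorem irrefl (a : X) : ¬ E a a := fun h => hM.asymm h h

end ModelM

/-! ## Levels of the cumulative hierarchy -/

/-- `x` is the set of all subsets of members of `h ∩ x`. -/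
def IsPot (E : X → X → Prop) (h x : X) : Prop :=
  (∀ z, E z x → ∃ r, E r h ∧ E r x ∧ SubE E z r) ∧
    ∀ r, E r h → E r x → ∀ z, SubE E z r → E z x

/-- `h` is a history in the sense of level theory: each of its members is the set of all subsets
of the earlier ones. -/
def IsHistory (E : X → X → Prop) (h : X) : Prop := ∀ x, E x h → IsPot E h x

/-- `s` is a level of the cumulative hierarchy. Histories replace the usual recursion along the
ordinals, and make being a level a `Δ₀^𝒫` property. -/
def IsLevel (E : X → X → Prop) (s : X) : Prop := ∃ h, SubE E h s ∧ IsHistory E h ∧ IsPot E h s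

section Definability

variable {E : X → X → Prop} {n : ℕ} (s t : (Fin n → X) → X) [IsTerm s] [IsTerm t]

instance : Definable E Delta0PC fun v => IsPot E (s v) (t v) := by
  unfold IsPot
  infer_instance

instance : Definable E Delta0PC fun v => IsHistory E (t v) := by
  unfold IsHistory
  infer_instance

instance : Definable E Delta0PC fun v => IsLevel E (t v) := by
  unfold IsLevel
  infer_instance

instance {C : ∀ n, SF n → Prop} [ClosedUnderBounded C] :
    Definable E C fun v => TransSet E (t v) := by
  unfold TransSet
  infer_instance

end Definability

namespace IsHistory

variable {E : X → X → Prop} {h : X}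

theorem transSet_of_isPot (hh : IsHistory E h) (hM : ModelM E) {x : X} (hx : IsPot E h x) :
    TransSet E x := by
  refine hM.induction (fun x => IsPot E h x → TransSet E x) (fun x ih hx y hy z hz => ?_) x hx
  obtain ⟨r, hrh, hrx, hyr⟩ := hx.1 y hy
  exact hx.2 r hrh hrx z (ih r hrx (hh r hrh) z (hyr z hz))

theorem isLevel_of_isPot (hh : IsHistory E h) (hM : ModelM E) {x : X} (hx : IsPot E h x) :
    IsLevel E x := by
  obtain ⟨k, hk⟩ := hM.exists_sep (fun r => E r x) h
  have isPot_k {y : X} (hy : IsPot E h y) (hyx : SubE E y x) : IsPot E k y := by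
    refine ⟨fun z hz => ?_, fun r hrk => hy.2 r ((hk r).1 hrk).1⟩
    obtain ⟨r, hrh, hry, hzr⟩ := hy.1 z hz
    exact ⟨r, (hk r).2 ⟨hrh, hyx r hry⟩, hry, hzr⟩
  refine ⟨k, fun r hr => ((hk r).1 hr).2, fun y hy => ?_, isPot_k hx fun _ => id⟩
  obtain ⟨hyh, hyx⟩ := (hk y).1 hy
  exact isPot_k (hh y hyh) (hh.transSet_of_isPot hM hx y hyx)

end IsHistory

namespace IsLevel

variable {E : X → X → Prop} {s t : X}

theorem transSet (hs : IsLevel E s) (hM : ModelM E) : TransSet E s :=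
  let ⟨_, _, hh, hhs⟩ := hs
  hh.transSet_of_isPot hM hhs

theorem mem_of_subset (hs : IsLevel E s) {y z : X} (hy : E y s) (hzy : SubE E z y) : E z s :=
  let ⟨_, _, _, hhs⟩ := hs
  let ⟨r, hrh, hrs, hyr⟩ := hhs.1 y hy
  hhs.2 r hrh hrs z fun x hx => hyr x (hzy x hx)

theorem exists_isLevel_superset_of_mem (hs : IsLevel E s) (hM : ModelM E) {z : X} (hz : E z s) :
    ∃ r, E r s ∧ IsLevel E r ∧ SubE E z r :=
  let ⟨_, _, hh, hhs⟩ := hs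
  let ⟨r, hrh, hrs, hzr⟩ := hhs.1 z hz
  ⟨r, hrs, hh.isLevel_of_isPot hM (hh r hrh), hzr⟩

theorem subset_of_forall_isLevel (hs : IsLevel E s) (ht : IsLevel E t) (hM : ModelM E)
    (h : ∀ r, E r s → IsLevel E r → E r t) : SubE E s t := fun _ hz =>
  let ⟨r, hrs, hr, hzr⟩ := hs.exists_isLevel_superset_of_mem hM hz
  ht.mem_of_subset (h r hrs hr) hzr

theorem comparable (hs : IsLevel E s) (ht : IsLevel E t) (hM : ModelM E) :
    E s t ∨ s = t ∨ E t s := by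
  -- Bounding `t` by a transitive set makes the induction hypothesis `Δ₀^𝒫`.
  obtain ⟨a, ha, hta⟩ := hM.exists_transSet_mem t
  refine hM.induction (fun s => IsLevel E s → ∀ t, E t a → IsLevel E t → E s t ∨ s = t ∨ E t s)
    (fun s ihs hs => ?_) s hs t hta ht
  refine hM.induction (fun t => E t a → IsLevel E t → E s t ∨ s = t ∨ E t s)
    fun t iht hta ht => ?_
  by_contra! hst
  refine hst.2.1 (hM.subset_antisymm (hs.subset_of_forall_isLevel ht hM fun r hrs hr => ?_)
    (ht.subset_of_forall_isLevel hs hM fun r hrt hr => ?_))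
  · rcases ihs r hrs hr t hta ht with hrt | rfl | htr
    · exact hrt
    · exact absurd hrs hst.2.2
    · exact absurd (hs.transSet hM r hrs t htr) hst.2.2
  · rcases iht r hrt (ha t hta r hrt) hr with hsr | rfl | hrs
    · exact absurd (ht.transSet hM r hrt s hsr) hst.1
    · exact absurd hrt hst.1
    · exact hrs

end IsLevel

theorem ModelM.exists_isLevel_forall_isLevel_mem {E : X → X → Prop} (hM : ModelM E) (c : X) :
    ∃ s, IsLevel E s ∧ ∀ r, E r c → IsLevel E r → E r s := by
  obtain ⟨t, ht, hct⟩ := hM.exists_transSet_superset c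
  obtain ⟨h, hh⟩ := hM.exists_sep (IsLevel E) t
  obtain ⟨p, hp⟩ := hM.exists_power t
  obtain ⟨s, hs⟩ := hM.exists_sep (fun z => ∃ r, E r h ∧ SubE E z r) p
  have mem_s {r : X} (hrt : E r t) (hr : IsLevel E r) : E r s :=
    (hs r).2 ⟨(hp r).2 (ht r hrt), r, (hh r).2 ⟨hrt, hr⟩, fun _ => id⟩
  have hhist : IsHistory E h := by
    intro r hrh
    obtain ⟨hrt, hr⟩ := (hh r).1 hrh
    refine ⟨fun z hz => ?_, fun q _ hqr z hzq => hr.mem_of_subset hqr hzq⟩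
    obtain ⟨q, hqr, hq, hzq⟩ := hr.exists_isLevel_superset_of_mem hM hz
    exact ⟨q, (hh q).2 ⟨ht r hrt q hqr, hq⟩, hqr, hzq⟩
  refine ⟨s, hhist.isLevel_of_isPot hM ⟨fun z hz => ?_, fun r hrh _ z hzr => ?_⟩,
    fun r hrc => mem_s (hct r hrc)⟩
  · obtain ⟨-, r, hrh, hzr⟩ := (hs z).1 hz
    obtain ⟨hrt, hr⟩ := (hh r).1 hrh
    exact ⟨r, hrh, mem_s hrt hr, hzr⟩
  · have hrt := ((hh r).1 hrh).1
    exact (hs z).2 ⟨(hp z).2 fun x hx => ht r hrt x (hzr x hx), r, hrh, hzr⟩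

namespace ModelKPP

variable {E : X → X → Prop} (hK : ModelKPP E)
include hK

theorem modelM : ModelM E := hK.1

theorem collection : CollectionScheme E Delta0PC := hK.2.1

theorem foundation : FoundationScheme E Pi1PC := hK.2.2

theorem exists_isLevel_superset (x : X) : ∃ s, IsLevel E s ∧ SubE E x s := by
  refine hK.foundation.sigma1_induction (fun x s => IsLevel E s ∧ SubE E x s) (fun x ih => ?_) x
  obtain ⟨c, hc⟩ := hK.collection.exists_bound (fun z r => IsLevel E r ∧ SubE E z r) x ih
  obtain ⟨s, hs, hcs⟩ := hK.modelM.exists_isLevel_forall_isLevel_mem c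
  refine ⟨s, hs, fun z hz => ?_⟩
  obtain ⟨r, hrc, hr, hzr⟩ := hc z hz
  exact hs.mem_of_subset (hcs r hrc hr) hzr

end ModelKPP

/-! ## Recursion into the levels -/

/-- `q = {u, s}` and `u ∈ s`: by foundation this unordered pair determines `u` and `s`. -/
def IsCode (E : X → X → Prop) (q u s : X) : Prop :=
  (∀ z, E z q → z = u ∨ z = s) ∧ E u q ∧ E s q ∧ E u s

/-- The partial function coded by the set `f` takes the value `s` at `u`. Members of `f` that are
not codes are ignored. -/
def HasValue (E : X → X → Prop) (f u s : X) : Prop := ∃ q, E q f ∧ IsCode E q u s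

/-- The partial function coded by the set `f` is defined at `u`. -/
def InDom (E : X → X → Prop) (f u : X) : Prop := ∃ s, HasValue E f u s

/-- `s` is a level containing `a` and `u` in which every member of a value of `f` on `u` has a
`Φ`-successor. -/
def IsStage (E Φ : X → X → Prop) (a f u s : X) : Prop :=
  IsLevel E s ∧ E a s ∧ E u s ∧
    ∀ v, E v u → ∀ r, HasValue E f v r → ∀ x, E x r → ∃ y, E y s ∧ Φ x y

/-- `f` is defined on `u`, and `s` is the least stage above its values there. -/
def IsLeastStage (E Φ : X → X → Prop) (a f u s : X) : Prop :=
  (∀ v, E v u → InDom E f v) ∧ IsStage E Φ a f u s ∧ ∀ t, E t s → ¬ IsStage E Φ a f u t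

/-- `f` is an approximation to the function `F` defined by the recursion in which `F u` is the
least stage above the values of `F` on `u`. -/
def IsAttempt (E Φ : X → X → Prop) (a f : X) : Prop :=
  ∀ u s, HasValue E f u s → IsLeastStage E Φ a f u s

theorem forall_hasValue_iff {E : X → X → Prop} {f u : X} {P : X → Prop} :
    (∀ s, HasValue E f u s → P s) ↔ ∀ q, E q f → ∀ s, E s q → IsCode E q u s → P s := by
  refine ⟨fun h q hqf s _ hq => h s ⟨q, hqf, hq⟩, ?_⟩
  exact fun h s ⟨q, hqf, hq⟩ => h q hqf s hq.2.2.1 hq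

section Definability

variable {E Φ : X → X → Prop} {n : ℕ} (a f u s : (Fin n → X) → X)
  [IsTerm a] [IsTerm f] [IsTerm u] [IsTerm s]

instance : Definable E Delta0PC fun v => IsCode E (f v) (u v) (s v) := by
  unfold IsCode
  infer_instance

instance : Definable E Delta0PC fun v => HasValue E (f v) (u v) (s v) := by
  unfold HasValue
  infer_instance

instance : Definable E Delta0PC fun v => InDom E (f v) (u v) := by
  refine Definable.of_iff (P := fun v => ∃ q, E q (f v) ∧ ∃ s, E s q ∧ IsCode E q (u v) s)
    inferInstance fun v => ⟨?_, ?_⟩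
  · exact fun ⟨s, q, hqf, hq⟩ => ⟨q, hqf, s, hq.2.2.1, hq⟩
  · exact fun ⟨q, hqf, s, _, hq⟩ => ⟨s, q, hqf, hq⟩

variable [DefinableRel E Delta0PC Φ]

instance : Definable E Delta0PC fun v => IsStage E Φ (a v) (f v) (u v) (s v) := by
  simp only [IsStage, forall_hasValue_iff]
  infer_instance

instance : Definable E Delta0PC fun v => IsLeastStage E Φ (a v) (f v) (u v) (s v) := by
  unfold IsLeastStage
  infer_instance

instance : Definable E Delta0PC fun v => IsAttempt E Φ (a v) (f v) := by
  refine Definable.of_iff (P := fun v => ∀ q, E q (f v) → ∀ u, E u q → ∀ s, E s q →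
    IsCode E q u s → IsLeastStage E Φ (a v) (f v) u s) inferInstance fun v => ⟨?_, ?_⟩
  · exact fun h q hqf u _ s _ hq => h u s ⟨q, hqf, hq⟩
  · exact fun h u s ⟨q, hqf, hq⟩ => h q hqf u hq.2.1 s hq.2.2.1 hq

end Definability

theorem IsCode.injective {E : X → X → Prop} (hM : ModelM E) {q u s u' s' : X}
    (h : IsCode E q u s) (h' : IsCode E q u' s') : u = u' ∧ s = s' := by
  obtain ⟨hq, -, -, hus⟩ := h
  obtain ⟨-, hu', hs', hus'⟩ := h'
  rcases hq u' hu' with rfl | rfl <;> rcases hq s' hs' with rfl | rfl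
  · exact absurd hus' (hM.irrefl _)
  · exact ⟨rfl, rfl⟩
  · exact absurd hus' (hM.asymm hus)
  · exact absurd hus' (hM.irrefl _)

theorem ModelM.exists_isCode {E : X → X → Prop} (hM : ModelM E) {u s : X} (hus : E u s) :
    ∃ q, IsCode E q u s := by
  obtain ⟨q, hq⟩ := hM.exists_pair u s
  exact ⟨q, fun z => (hq z).1, (hq u).2 (.inl rfl), (hq s).2 (.inr rfl), hus⟩

section Recursion

variable {E Φ : X → X → Prop} {a f g u s t : X}

theorem isLeastStage_congr (hfg : ∀ v, E v u → ∀ r, HasValue E f v r ↔ HasValue E g v r) :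
    IsLeastStage E Φ a f u s ↔ IsLeastStage E Φ a g u s := by
  simp +contextual only [IsLeastStage, IsStage, InDom, hfg]

theorem IsLeastStage.unique (hM : ModelM E) (hs : IsLeastStage E Φ a f u s)
    (ht : IsLeastStage E Φ a f u t) : s = t := by
  rcases hs.2.1.1.comparable ht.2.1.1 hM with hst | rfl | hts
  · exact absurd hs.2.1 (ht.2.2 s hst)
  · rfl
  · exact absurd ht.2.1 (hs.2.2 t hts)

theorem IsAttempt.value_unique (hf : IsAttempt E Φ a f) (hg : IsAttempt E Φ a g)
    (hM : ModelM E) (hs : HasValue E f u s) (ht : HasValue E g u t) : s = t := by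
  have : Definable E Delta0PC fun v : Fin 1 → X =>
      ∀ s, HasValue E f (v 0) s → ∀ t, HasValue E g (v 0) t → s = t := by
    simp only [forall_hasValue_iff]
    infer_instance
  refine hM.induction (fun u => ∀ s, HasValue E f u s → ∀ t, HasValue E g u t → s = t)
    (fun u ih s hs t ht => ?_) u s hs t ht
  have hfg (v : X) (hv : E v u) (r : X) : HasValue E f v r ↔ HasValue E g v r := by
    obtain ⟨p, hp⟩ := (hf u s hs).1 v hv
    obtain ⟨q, hq⟩ := (hg u t ht).1 v hv
    obtain rfl := ih v hv p hp q hq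
    exact ⟨fun hr => ih v hv r hr p hq ▸ hq, fun hr => ih v hv p hp r hr ▸ hp⟩
  exact ((isLeastStage_congr hfg).1 (hf u s hs)).unique hM (hg u t ht)

theorem IsLeastStage.of_hasValue_imp (h : IsLeastStage E Φ a f u s)
    (hfg : ∀ v r, HasValue E f v r → HasValue E g v r)
    (hgf : ∀ v, E v u → ∀ r, HasValue E g v r → HasValue E f v r) : IsLeastStage E Φ a g u s :=
  (isLeastStage_congr fun v hv r => ⟨hfg v r, hgf v hv r⟩).1 h

theorem isAttempt_of_sUnion (hM : ModelM E) {c : X} (hc : ∀ f, E f c → IsAttempt E Φ a f)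
    (hg : ∀ q, E q g ↔ ∃ f, E f c ∧ E q f) : IsAttempt E Φ a g := by
  have hgc (v r : X) : HasValue E g v r ↔ ∃ f, E f c ∧ HasValue E f v r := by
    simp only [HasValue, hg]
    tauto
  intro u s hus
  obtain ⟨f, hfc, hfus⟩ := (hgc u s).1 hus
  have hf := hc f hfc
  refine (hf u s hfus).of_hasValue_imp (fun v r hr => (hgc v r).2 ⟨f, hfc, hr⟩) fun v hv r hr => ?_
  obtain ⟨f', hf'c, hr'⟩ := (hgc v r).1 hr
  obtain ⟨p, hp⟩ := (hf u s hfus).1 v hv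
  exact hf.value_unique (hc f' hf'c) hM hp hr' ▸ hp

theorem IsAttempt.exists_extension (hf : IsAttempt E Φ a f) (hM : ModelM E)
    (hu : ¬ InDom E f u) (hs : IsLeastStage E Φ a f u s) :
    ∃ g, IsAttempt E Φ a g ∧ InDom E g u := by
  obtain ⟨q, hq⟩ := hM.exists_isCode hs.2.1.2.2.1
  obtain ⟨g, hg⟩ := hM.exists_insert q f
  have hfg (v r : X) (hr : HasValue E f v r) : HasValue E g v r :=
    let ⟨p, hpf, hp⟩ := hr
    ⟨p, (hg p).2 (.inr hpf), hp⟩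
  have hgf {v r : X} (hr : HasValue E g v r) : (v = u ∧ r = s) ∨ HasValue E f v r := by
    obtain ⟨p, hpg, hp⟩ := hr
    rcases (hg p).1 hpg with rfl | hpf
    · exact .inl (hp.injective hM hq)
    · exact .inr ⟨p, hpf, hp⟩
  refine ⟨g, fun v r hr => ?_, s, q, (hg q).2 (.inl rfl), hq⟩
  have hvr : IsLeastStage E Φ a f v r := by
    rcases hgf hr with ⟨rfl, rfl⟩ | hr
    · exact hs
    · exact hf v r hr
  refine hvr.of_hasValue_imp hfg fun w hw t ht => (hgf ht).resolve_left ?_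
  rintro ⟨rfl, -⟩
  exact hu (hvr.1 w hw)

end Recursion

namespace ModelKPP

variable {E Φ : X → X → Prop} (hK : ModelKPP E) [DefinableRel E Delta0PC Φ]
  (hΦ : ∀ x, ∃ y, Φ x y) (a : X)
include hK hΦ

theorem exists_isLeastStage {f u : X} (hfu : ∀ v, E v u → InDom E f v) :
    ∃ s, IsLeastStage E Φ a f u s := by
  have hM := hK.modelM
  obtain ⟨b, hb⟩ := hM.exists_sUnion f
  obtain ⟨b', hb'⟩ := hM.exists_sUnion b
  obtain ⟨c, hc⟩ := hK.collection.exists_bound Φ b' fun x _ => hΦ x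
  obtain ⟨d, hd⟩ := hM.exists_insert u c
  obtain ⟨e, he⟩ := hM.exists_insert a d
  obtain ⟨s, hs, hes⟩ := hK.exists_isLevel_superset e
  have hstage : IsStage E Φ a f u s := by
    refine ⟨hs, hes a ((he a).2 (.inl rfl)), hes u ((he u).2 (.inr ((hd u).2 (.inl rfl)))),
      fun v _ r ⟨q, hqf, hq⟩ x hxr => ?_⟩
    obtain ⟨y, hyc, hxy⟩ := hc x ((hb' x).2 ⟨r, (hb r).2 ⟨q, hqf, hq.2.2.1⟩, hxr⟩)
    exact ⟨y, hes y ((he y).2 (.inr ((hd y).2 (.inr hyc)))), hxy⟩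
  obtain ⟨t, ht, hmin⟩ := hM.exists_minimal (IsStage E Φ a f u) hstage
  exact ⟨t, hfu, ht, hmin⟩

theorem exists_isAttempt (u : X) : ∃ f, IsAttempt E Φ a f ∧ InDom E f u := by
  have hM := hK.modelM
  refine hK.foundation.sigma1_induction (fun u f => IsAttempt E Φ a f ∧ InDom E f u)
    (fun u ih => ?_) u
  obtain ⟨c, hc⟩ := hK.collection.exists_bound (fun v f => IsAttempt E Φ a f ∧ InDom E f v) u ih
  obtain ⟨c', hc'⟩ := hM.exists_sep (IsAttempt E Φ a) c
  obtain ⟨g, hg⟩ := hM.exists_sUnion c'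
  have hgatt : IsAttempt E Φ a g := isAttempt_of_sUnion hM (fun f hf => ((hc' f).1 hf).2) hg
  by_cases hgu : InDom E g u
  · exact ⟨g, hgatt, hgu⟩
  have hgdom (v : X) (hv : E v u) : InDom E g v := by
    obtain ⟨f, hfc, hf, s, q, hqf, hq⟩ := hc v hv
    exact ⟨s, q, (hg q).2 ⟨f, (hc' f).2 ⟨hfc, hf⟩, hqf⟩, hq⟩
  obtain ⟨s, hs⟩ := hK.exists_isLeastStage hΦ a hgdom
  exact hgatt.exists_extension hM hgu hs

/-- A form of weak dependent choice: iterating `ω` times the passage to a level that contains a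
`Φ`-successor of each element gives a set closed under having `Φ`-successors. -/
theorem exists_closed_set : ∃ d, E a d ∧ ∀ x, E x d → ∃ y, E y d ∧ Φ x y := by
  have hM := hK.modelM
  obtain ⟨w, ⟨e, hew, -⟩, hsucc⟩ := hM.exists_inductiveSet
  obtain ⟨f, hf, s, hfw⟩ := hK.exists_isAttempt hΦ a w
  have hdom (v : X) (hv : E v w) : ∃ r, HasValue E f v r := (hf w s hfw).1 v hv
  obtain ⟨b, hb⟩ := hM.exists_sUnion f
  obtain ⟨k, hk⟩ := hM.exists_sep (fun r => ∃ v, E v w ∧ HasValue E f v r) b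
  obtain ⟨d, hd⟩ := hM.exists_sUnion k
  have mem_d {v r y : X} (hv : E v w) (hr : HasValue E f v r) (hy : E y r) : E y d := by
    obtain ⟨q, hqf, hq⟩ := id hr
    exact (hd y).2 ⟨r, (hk r).2 ⟨(hb r).2 ⟨q, hqf, hq.2.2.1⟩, v, hv, hr⟩, hy⟩
  refine ⟨d, ?_, fun x hx => ?_⟩
  · obtain ⟨r, hr⟩ := hdom e hew
    exact mem_d hew hr (hf e r hr).2.1.2.1
  · obtain ⟨r, hrk, hxr⟩ := (hd x).1 hx
    obtain ⟨-, v, hv, hr⟩ := (hk r).1 hrk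
    obtain ⟨v', hv', hvv'⟩ := hsucc v hv
    obtain ⟨r', hr'⟩ := hdom v' hv'
    obtain ⟨y, hy, hxy⟩ := (hf v' r' hr').2.1.2.2.2 v ((hvv' v).2 (.inr rfl)) r hr x hxr
    exact ⟨y, mem_d hv' hr' hy, hxy⟩

end ModelKPP

theorem ModelKPP.exists_minimal_of_exists {E : X → X → Prop} (hK : ModelKPP E) (R : X → X → Prop)
    [DefinableRel E Delta0PC R] {x₀ y₀ : X} (hR₀ : R x₀ y₀) :
    ∃ x, (∃ y, R x y) ∧ ∀ z, E z x → ¬ ∃ y, R z y := by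
  have hM := hK.modelM
  by_contra! hdesc
  obtain ⟨t, ht, hx₀⟩ := hM.exists_transSet_mem x₀
  -- Iterating `Φ` from `{y₀}` collects enough witnesses for a descent below `x₀` inside `t`.
  let Φ (r s : X) : Prop := ∀ x, E x t → (∃ y, E y r ∧ R x y) → ∃ z, E z x ∧ ∃ y, E y s ∧ R z y
  have : DefinableRel E Delta0PC Φ := ⟨inferInstance⟩
  have hΦ (r : X) : ∃ s, Φ r s := by
    obtain ⟨w, hw⟩ := hM.exists_sep (fun x => ∃ y, E y r ∧ R x y) t
    obtain ⟨s, hs⟩ := hK.collection.exists_bound (fun x y => ∃ z, E z x ∧ R z y) w fun x hx => by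
      obtain ⟨-, y, -, hxy⟩ := (hw x).1 hx
      obtain ⟨z, hzx, y', hzy'⟩ := hdesc x ⟨y, hxy⟩
      exact ⟨y', z, hzx, hzy'⟩
    refine ⟨s, fun x hxt hx => ?_⟩
    obtain ⟨y, hys, z, hzx, hzy⟩ := hs x ((hw x).2 ⟨hxt, hx⟩)
    exact ⟨z, hzx, y, hys, hzy⟩
  obtain ⟨a, ha⟩ := hM.exists_pair y₀ y₀
  obtain ⟨d, had, hd⟩ := hK.exists_closed_set hΦ a
  obtain ⟨x, ⟨hxt, r, hrd, hx⟩, hmin⟩ := hM.exists_minimal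
    (fun x => E x t ∧ ∃ r, E r d ∧ ∃ y, E y r ∧ R x y)
    ⟨hx₀, a, had, y₀, (ha y₀).2 (.inl rfl), hR₀⟩
  obtain ⟨s, hsd, hrs⟩ := hd r hrd
  obtain ⟨z, hzx, hz⟩ := hrs x hxt hx
  exact hmin z hzx ⟨ht x hxt z hzx, s, hsd, hz⟩

/-- `KP^𝒫` proves `Σ₁^𝒫`-Foundation. -/
theorem KPP_proves_sigma1P_foundation (X : Type u) (E : X → X → Prop)
    (hM : ModelKPP E) : FoundationScheme E Sigma1PC := by
  rintro n _ ⟨ψ, hψ, rfl⟩ p ⟨x₀, y₀, hx₀⟩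
  have hterm : ∀ i, IsTerm fun v : Fin 2 → X =>
      (Fin.snoc (Fin.snoc (fun j => p j) (v 0) : Fin (n + 1) → X) (v 1) : Fin (n + 2) → X) i :=
    isTerm_snoc (isTerm_snoc (fun j => inferInstance) inferInstance) inferInstance
  have hR : DefinableRel E Delta0PC fun x y => ψ.Eval E (Fin.snoc (Fin.snoc p x) y) :=
    ⟨Definable.of_formula hψ hterm⟩
  exact hM.exists_minimal_of_exists _ hx₀
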